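/- Under the assumptions (P1)–(P2) on the equation of state, let g denote the inverse of Q extended by 0 for y ≤ 0, and let g₀(y) = k^{−α} ((γ−1)/γ)^α y₊^α with α = 1/(γ−1). Then there exist κ₀ > 0 and C > 0 such that for all y ∈ [0, κ₀], |g(y) − g₀(y)| + y·|g'(y) − g₀'(y)| ≤ C y^{α+1}. -/

import Mathlib

/-!
Write `β = γ - 1 ∈ (0, 1)`, so `α = 1 / β`, and `h = P' / (s + P)` for the integrand of `Q`.
Near `0` the expansion of the pressure gives `P' = kγ s^β (1 + O(s))`, and `s + P = s (1 + O(s^β))`;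
since `β < 1` the second error dominates and `h(s) = kγ s^(β-1) + O(s^(2β-1))`
(`integrand_bound`). Integration yields `Q(ρ) = c ρ^β + O(ρ^(2β))` with `c = kγ / β`
(`integral_bound`).

Now put `ρ = g(y)` and `q = ρ^β`, so that `y = c q + O(q²)`. Hence `q = y / c + O(y²)`, and taking
`α`-th powers, `ρ = (y / c)^α + O(y^(α+1))`, where `(y / c)^α = g₀(y)`. For the derivatives, both
`y g'(y) = y / h(ρ)` and `y g₀'(y) = α g₀(y)` are compared with `α ρ`: the identity `α kγ = c` makes
the leading terms of `y` and `α ρ h(ρ)` agree, so `y / h(ρ) - α ρ = O(ρ q) = O(y^(α+1))`.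
Both estimates are in `inversion_bound`.
-/

open Set

/-! ### Expansion of the integrand -/

/-- Two-term expansion of the integrand of `Q` at `0`. The relative error is `O(s^(γ-1))`, coming
from `P s` in the denominator; the errors due to `f` and `f'` are of relative order `s ≤ s^(γ-1)`. -/
lemma integrand_bound {P P' f : ℝ → ℝ} {k γ ζ : ℝ}
    (hk : 0 < k) (hγ : 1 < γ) (hγ2 : γ < 2) (hζ : 0 < ζ)
    (hPderiv : ∀ ρ ≥ (0:ℝ), HasDerivAt P (P' ρ) ρ)
    (hPpos : ∀ ρ > (0:ℝ), 0 < P ρ)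
    (hf : ContDiffOn ℝ 1 f (Icc 0 ζ)) (hf0 : f 0 = 0)
    (hP2 : ∀ ρ ∈ Icc (0:ℝ) ζ, P ρ = k * ρ ^ γ * (1 + f ρ)) :
    ∃ M > 0, ∃ r > 0, ∀ s ∈ Ioc 0 r,
      |P' s / (s + P s) - k * γ * s ^ (γ - 1 - 1)| ≤ M * s ^ (2 * (γ - 1) - 1) := by
  have hu := uniqueDiffOn_Icc hζ
  have hcont := hf.continuousOn_derivWithin hu le_rfl
  obtain ⟨F₀, hF₀⟩ := isCompact_Icc.exists_bound_of_continuousOn hcont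
  set F := max F₀ 0
  have hF0 : 0 ≤ F := le_max_right _ _
  have hF : ∀ x ∈ Icc 0 ζ, |derivWithin f (Icc 0 ζ) x| ≤ F :=
    fun x hx => (hF₀ x hx).trans (le_max_left _ _)
  have hfb : ∀ x ∈ Icc 0 ζ, |f x| ≤ F * x := by
    intro x hx
    have := (convex_Icc (0:ℝ) ζ).norm_image_sub_le_of_norm_derivWithin_le
      (f := f) (C := F) (hf.differentiableOn one_ne_zero) hF
      (x := 0) (y := x) ⟨le_rfl, hζ.le⟩ hx
    simpa [hf0, Real.norm_eq_abs, abs_of_nonneg hx.1] using this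
  -- The bound `r ≤ 1` gives `s ≤ s ^ (γ - 1)`; `r < ζ` keeps `s` in the interior, where `f` has a
  -- two-sided derivative.
  refine ⟨k * F * (γ + 1) + k ^ 2 * γ * (1 + F), by positivity, min (ζ / 2) 1, by positivity, ?_⟩
  rintro s ⟨hs0, hsr⟩
  have hs1 : s ≤ 1 := hsr.trans (min_le_right _ _)
  have hsζ : s < ζ := by linarith [hsr.trans (min_le_left _ _)]
  have hsI : s ∈ Icc 0 ζ := ⟨hs0.le, hsζ.le⟩
  have hnhds : Icc 0 ζ ∈ nhds s := Icc_mem_nhds hs0 hsζ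
  set f' := derivWithin f (Icc 0 ζ) s
  have hfd : HasDerivAt f f' s :=
    ((hf.differentiableOn one_ne_zero) s hsI).hasDerivWithinAt.hasDerivAt hnhds
  have hPd : HasDerivAt (fun ρ => k * ρ ^ γ * (1 + f ρ))
      (k * (γ * s ^ (γ - 1)) * (1 + f s) + k * s ^ γ * f') s :=
    ((Real.hasDerivAt_rpow_const (Or.inl hs0.ne')).const_mul k).mul (hfd.const_add 1)
  have hP' : P' s = k * (γ * s ^ (γ - 1)) * (1 + f s) + k * s ^ γ * f' := by
    refine (hPderiv s hs0.le).unique (hPd.congr_of_eventuallyEq ?_)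
    filter_upwards [hnhds] with x hx using hP2 x hx
  have hP := hP2 s hsI
  have hPp := hPpos s hs0
  have hF1 := hF s hsI
  have hf1 := hfb s hsI
  have hγs : s ^ γ = s * s ^ (γ - 1) := by
    rw [Real.rpow_sub_one hs0.ne']; field_simp
  have hmix : s * s ^ (γ - 1) ≤ s ^ (γ - 1) * s ^ (γ - 1) := by
    gcongr
    exact Real.self_le_rpow_of_le_one hs0.le hs1 (by linarith)
  have hpow1 : s * s ^ (γ - 1 - 1) = s ^ (γ - 1) := by
    rw [Real.rpow_sub_one hs0.ne' (γ - 1)]; field_simp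
  have hpow2 : s * s ^ (2 * (γ - 1) - 1) = s ^ (γ - 1) * s ^ (γ - 1) := by
    rw [Real.rpow_sub_one hs0.ne', two_mul, Real.rpow_add hs0]; field_simp
  have hq : 0 < s ^ (γ - 1) := by positivity
  have hq2 : 0 < s ^ (2 * (γ - 1) - 1) := by positivity
  have hden : 0 < s + P s := by positivity
  set q := s ^ (γ - 1)
  have hnum : P' s / (s + P s) - k * γ * s ^ (γ - 1 - 1)
      = (k * γ * q * f s + k * (s * q) * f' - k ^ 2 * γ * q * q * (1 + f s)) / (s + P s) := by
    rw [eq_div_iff hden.ne', sub_mul, div_mul_cancel₀ _ hden.ne', hP', hP, hγs]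
    linear_combination (-(k * γ) - k ^ 2 * γ * q * (1 + f s)) * hpow1
  rw [hnum, abs_div, abs_of_pos hden, div_le_iff₀ hden]
  have e1 : |k * γ * q * f s| ≤ k * γ * F * (q * q) := by
    rw [abs_mul, abs_of_pos (by positivity)]
    calc k * γ * q * |f s| ≤ k * γ * q * (F * s) := by gcongr
      _ = k * γ * F * (s * q) := by ring
      _ ≤ _ := by gcongr
  have e2 : |k * (s * q) * f'| ≤ k * F * (q * q) := by
    rw [abs_mul, abs_of_pos (by positivity)]
    calc k * (s * q) * |f'| ≤ k * (q * q) * F := by gcongr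
      _ = _ := by ring
  have e3 : |k ^ 2 * γ * q * q * (1 + f s)| ≤ k ^ 2 * γ * (1 + F) * (q * q) := by
    rw [abs_mul, abs_of_pos (by positivity)]
    have : |1 + f s| ≤ 1 + F := by
      refine (abs_add_le _ _).trans ?_
      rw [abs_one]
      nlinarith
    calc k ^ 2 * γ * q * q * |1 + f s| ≤ k ^ 2 * γ * q * q * (1 + F) := by gcongr
      _ = _ := by ring
  have hfin : (k * F * (γ + 1) + k ^ 2 * γ * (1 + F)) * (q * q)
      ≤ (k * F * (γ + 1) + k ^ 2 * γ * (1 + F)) * s ^ (2 * (γ - 1) - 1) * (s + P s) := by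
    rw [← hpow2]
    have : 0 ≤ (k * F * (γ + 1) + k ^ 2 * γ * (1 + F)) * s ^ (2 * (γ - 1) - 1) * P s := by
      positivity
    linarith
  refine le_trans ?_ hfin
  refine (abs_sub _ _).trans ?_
  have := abs_add_le (k * γ * q * f s) (k * (s * q) * f')
  linarith

/-! ### Expansion of the integral -/

/-- The integrand may be singular at `0`, but its singularity is dominated by integrable powers. -/
lemma intervalIntegrable_of_bound {h : ℝ → ℝ} {A M β r : ℝ} (hβ : 0 < β) (hr : 0 < r)
    (hc : ContinuousOn h (Ioi 0))
    (hb : ∀ s ∈ Ioc 0 r, |h s - A * s ^ (β - 1)| ≤ M * s ^ (2 * β - 1)) {ρ : ℝ} (hρ : 0 ≤ ρ) :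
    IntervalIntegrable h MeasureTheory.volume 0 ρ := by
  have hsmall : IntervalIntegrable h MeasureTheory.volume 0 r := by
    have i1 : IntervalIntegrable (fun s : ℝ => A * s ^ (β - 1)) MeasureTheory.volume 0 r :=
      (intervalIntegral.intervalIntegrable_rpow' (by linarith)).const_mul A
    have i2 : IntervalIntegrable (fun s : ℝ => M * s ^ (2 * β - 1)) MeasureTheory.volume 0 r :=
      (intervalIntegral.intervalIntegrable_rpow' (by linarith)).const_mul M
    have hm : MeasureTheory.AEStronglyMeasurable h
        (MeasureTheory.volume.restrict (uIoc 0 r)) := by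
      rw [uIoc_of_le hr.le]
      exact (hc.mono fun x hx => hx.1).aestronglyMeasurable measurableSet_Ioc
    have i3 : IntervalIntegrable (fun s => h s - A * s ^ (β - 1)) MeasureTheory.volume 0 r := by
      refine i2.mono_fun' (hm.sub (intervalIntegrable_iff.1 i1).aestronglyMeasurable) ?_
      refine (MeasureTheory.ae_restrict_iff' measurableSet_uIoc).2 (Filter.Eventually.of_forall ?_)
      rw [uIoc_of_le hr.le]
      exact hb
    simpa using i3.add i1
  rcases hρ.eq_or_lt with rfl | hρ
  · exact IntervalIntegrable.refl
  refine hsmall.trans (ContinuousOn.intervalIntegrable (hc.mono ?_))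
  intro x hx
  exact lt_of_lt_of_le (lt_min hr hρ) hx.1

/-- Integrated form of an expansion `h s = A s^(β-1) + O(s^(2β-1))`. -/
lemma integral_bound {h : ℝ → ℝ} {A M β r : ℝ} (hβ : 0 < β) (hr : 0 < r)
    (hc : ContinuousOn h (Ioi 0))
    (hb : ∀ s ∈ Ioc 0 r, |h s - A * s ^ (β - 1)| ≤ M * s ^ (2 * β - 1)) {ρ : ℝ}
    (hρ : ρ ∈ Ioc 0 r) :
    |(∫ s in (0:ℝ)..ρ, h s) - A / β * ρ ^ β| ≤ M / (2 * β) * ρ ^ (2 * β) := by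
  have i0 := intervalIntegrable_of_bound hβ hr hc hb hρ.1.le
  have i1 : IntervalIntegrable (fun s : ℝ => A * s ^ (β - 1)) MeasureTheory.volume 0 ρ :=
    (intervalIntegral.intervalIntegrable_rpow' (by linarith)).const_mul A
  have i2 : IntervalIntegrable (fun s : ℝ => M * s ^ (2 * β - 1)) MeasureTheory.volume 0 ρ :=
    (intervalIntegral.intervalIntegrable_rpow' (by linarith)).const_mul M
  have e1 : ∫ s in (0:ℝ)..ρ, A * s ^ (β - 1) = A / β * ρ ^ β := by
    rw [intervalIntegral.integral_const_mul, integral_rpow (Or.inl (by linarith)),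
      sub_add_cancel, Real.zero_rpow hβ.ne']
    ring
  have e2 : ∫ s in (0:ℝ)..ρ, M * s ^ (2 * β - 1) = M / (2 * β) * ρ ^ (2 * β) := by
    rw [intervalIntegral.integral_const_mul, integral_rpow (Or.inl (by linarith)),
      sub_add_cancel, Real.zero_rpow (by positivity)]
    ring
  rw [← e1, ← e2, ← intervalIntegral.integral_sub i0 i1]
  rw [← Real.norm_eq_abs]
  refine intervalIntegral.norm_integral_le_of_norm_le hρ.1.le ?_ i2
  exact Filter.Eventually.of_forall fun s hs => hb s ⟨hs.1, hs.2.trans hρ.2⟩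

/-! ### Inversion -/

lemma abs_rpow_sub_rpow_le {α a b B : ℝ} (hα : 1 ≤ α) (ha : 0 ≤ a) (hb : 0 ≤ b)
    (haB : a ≤ B) (hbB : b ≤ B) : |a ^ α - b ^ α| ≤ α * B ^ (α - 1) * |a - b| := by
  have h := (convex_Icc (0:ℝ) B).norm_image_sub_le_of_norm_hasDerivWithin_le
    (f := fun x : ℝ => x ^ α) (f' := fun x => α * x ^ (α - 1)) (C := α * B ^ (α - 1))
    (fun x _ => (Real.hasDerivAt_rpow_const (Or.inr hα)).hasDerivWithinAt)
    (fun x hx => by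
      have : 0 ≤ x ^ (α - 1) := Real.rpow_nonneg hx.1 _
      rw [Real.norm_of_nonneg (by positivity)]
      exact mul_le_mul_of_nonneg_left
        (Real.rpow_le_rpow hx.1 hx.2 (by linarith)) (by linarith))
    (x := b) (y := a) ⟨hb, hbB⟩ ⟨ha, haB⟩
  simpa [Real.norm_eq_abs] using h

/-- A right inverse of the strictly increasing `Q` on the positive axis maps onto the positive axis,
hence is continuous, and the inverse function rule applies. -/
lemma hasDerivAt_of_strictMonoOn_inverse {Q g h : ℝ → ℝ} (hmono : StrictMonoOn Q (Ici 0))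
    (hQ0 : Q 0 = 0) (hQd : ∀ ρ > 0, HasDerivAt Q (h ρ) ρ) (hh : ∀ ρ > 0, 0 < h ρ)
    (hginv : ∀ y > (0:ℝ), 0 < g y ∧ Q (g y) = y) {y : ℝ} (hy : 0 < y) :
    HasDerivAt g (h (g y))⁻¹ y := by
  have hgm : StrictMonoOn g (Ioi 0) := by
    intro a ha b hb hab
    have := hmono.lt_iff_lt (hginv a ha).1.le (hginv b hb).1.le
    rw [(hginv a ha).2, (hginv b hb).2] at this
    exact this.1 hab
  have himg : Ioi 0 ⊆ g '' Ioi 0 := by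
    intro ρ hρ
    have hρ' : (0:ℝ) < ρ := hρ
    have hQρ : 0 < Q ρ := by
      have := hmono self_mem_Ici hρ'.le hρ'
      rwa [hQ0] at this
    exact ⟨Q ρ, hQρ, hmono.injOn (hginv _ hQρ).1.le hρ'.le (hginv _ hQρ).2⟩
  have hgc : ContinuousAt g y :=
    hgm.continuousAt_of_image_mem_nhds (Ioi_mem_nhds hy)
      (Filter.mem_of_superset (Ioi_mem_nhds (hginv y hy).1) himg)
  refine HasDerivAt.of_local_left_inverse hgc (hQd _ (hginv y hy).1)
    (hh _ (hginv y hy).1).ne' ?_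
  filter_upwards [Ioi_mem_nhds hy] with z hz using (hginv z hz).2

/-- Inversion of `y = c ρ^β + O(ρ^(2β))` and of the expansion of the derivative `d` at `ρ`. The two
smallness hypotheses keep the errors below half of the leading terms. -/
lemma inversion_bound {α β A c M N ρ y d : ℝ} (hβ : 0 < β) (hα : 1 ≤ α) (hαβ : β * α = 1)
    (hc : 0 < c) (hA : A = c * β) (hN : 0 < N) (hM : 0 < M) (hρ : 0 < ρ) (hy : 0 < y)
    (hyb : |y - c * ρ ^ β| ≤ N * ρ ^ (2 * β))
    (hdb : |d - A * ρ ^ (β - 1)| ≤ M * ρ ^ (2 * β - 1))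
    (hNs : N * ρ ^ β ≤ c / 2) (hMs : M * ρ ^ β ≤ A / 2) :
    |ρ - (y / c) ^ α| ≤ α * (N / c) * (2 / c) ^ (α + 1) * y ^ (α + 1) ∧
    |y / d - α * ρ| ≤ 2 * (N + α * M) / A * (2 / c) ^ (α + 1) * y ^ (α + 1) := by
  have hApos : 0 < A := hA ▸ mul_pos hc hβ
  have hq2 : ρ ^ (2 * β) = ρ ^ β * ρ ^ β := by rw [two_mul, Real.rpow_add hρ]
  have hp1 : ρ * ρ ^ (β - 1) = ρ ^ β := by
    rw [Real.rpow_sub_one hρ.ne']; field_simp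
  have hp2 : ρ * ρ ^ (2 * β - 1) = ρ ^ β * ρ ^ β := by
    rw [Real.rpow_sub_one hρ.ne', hq2]; field_simp
  have hρq : (ρ ^ β) ^ α = ρ := by rw [← Real.rpow_mul hρ.le, hαβ, Real.rpow_one]
  have hq : 0 < ρ ^ β := by positivity
  rw [hq2] at hyb
  set q := ρ ^ β
  have hyl := (abs_le.1 hyb).1
  have hqy : q ≤ 2 / c * y := by
    rw [div_mul_eq_mul_div, le_div_iff₀ hc]
    nlinarith
  have hpow : (2 / c * y) ^ (α + 1) = (2 / c) ^ (α + 1) * y ^ (α + 1) :=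
    Real.mul_rpow (by positivity) hy.le
  have hB : 0 < 2 / c * y := by positivity
  constructor
  · have h1 : |q - y / c| ≤ N / c * (q * q) := by
      have : q - y / c = -(y - c * q) / c := by field_simp; ring
      rw [this, abs_div, abs_neg, abs_of_pos hc, div_le_iff₀ hc]
      refine hyb.trans (le_of_eq ?_)
      field_simp
    have h2 := abs_rpow_sub_rpow_le hα hq.le (by positivity : 0 ≤ y / c) hqy
      (by rw [div_mul_eq_mul_div]; gcongr; linarith)
    rw [hρq] at h2
    have h3 : (2 / c * y) ^ (α + 1) = (2 / c * y) ^ (α - 1) * ((2 / c * y) * (2 / c * y)) := by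
      rw [← pow_two, ← Real.rpow_two, ← Real.rpow_add hB]
      ring_nf
    calc _ ≤ _ := h2
      _ ≤ α * (2 / c * y) ^ (α - 1) * (N / c * ((2 / c * y) * (2 / c * y))) := by
        gcongr
        exact h1.trans (by gcongr)
      _ = α * (N / c) * (2 / c * y) ^ (α + 1) := by rw [h3]; ring
      _ = _ := by rw [hpow]; ring
  -- Multiplying by `ρ` turns the two-term expansion of `d` into one in powers of `q`.
  · have h1 : |ρ * d - A * q| ≤ M * (q * q) := by
      have : ρ * d - A * q = ρ * (d - A * ρ ^ (β - 1)) := by rw [← hp1]; ring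
      rw [this, abs_mul, abs_of_pos hρ, ← hp2]
      calc _ ≤ ρ * (M * ρ ^ (2 * β - 1)) := by gcongr
        _ = _ := by ring
    have h2 : A / 2 * q ≤ ρ * d := by
      have := (abs_le.1 h1).1
      nlinarith
    have hρd : 0 < ρ * d := lt_of_lt_of_le (by positivity) h2
    have hd : 0 < d := pos_of_mul_pos_right hρd hρ.le
    have h3 : |y - α * (ρ * d)| ≤ (N + α * M) * (q * q) := by
      have : y - α * (ρ * d) = (y - c * q) - α * (ρ * d - A * q) := by
        rw [hA]; linear_combination (-c * q) * hαβ
      rw [this]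
      refine (abs_sub _ _).trans ?_
      rw [abs_mul, abs_of_pos (by linarith : 0 < α)]
      nlinarith [mul_le_mul_of_nonneg_left h1 (by linarith : 0 ≤ α)]
    have h4 : y / d - α * ρ = (y - α * (ρ * d)) / d := by field_simp
    rw [h4, abs_div, abs_of_pos hd, div_le_iff₀ hd]
    have h5 : ρ * q ≤ (2 / c * y) ^ (α + 1) := by
      calc ρ * q = q ^ (α + 1) := by rw [Real.rpow_add_one hq.ne', hρq]
        _ ≤ _ := by gcongr
    calc _ ≤ _ := h3
      _ = 2 * (N + α * M) / A * q * (A / 2 * q) := by field_simp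
      _ ≤ 2 * (N + α * M) / A * q * (ρ * d) := by gcongr
      _ = 2 * (N + α * M) / A * (ρ * q) * d := by ring
      _ ≤ 2 * (N + α * M) / A * (2 / c * y) ^ (α + 1) * d := by gcongr
      _ = _ := by rw [hpow]; ring

/-! ### The expansion of `g` -/

/-- Under (P1)-(P2), the inverse g of the enthalpy integral Q (extended by 0 for y ≤ 0)
satisfies |g(y) − g₀(y)| + y·|g'(y) − g₀'(y)| ≤ C y^{α+1} near y = 0, where
g₀(y) = k^{−α}((γ−1)/γ)^α y₊^α and α = 1/(γ−1). -/
theorem stmt_1 (P P' f Q g g₀ : ℝ → ℝ) (k γ ζ α : ℝ)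
    (hk : 0 < k) (hγ : 4 / 3 < γ) (hγ2 : γ < 2) (hζ : 0 < ζ)
    (hα : α = 1 / (γ - 1))
    (hPderiv : ∀ ρ ≥ (0:ℝ), HasDerivAt P (P' ρ) ρ)
    (hP'cont : ContinuousOn P' (Set.Ici 0))
    (hP0 : P 0 = 0)
    (hP'pos : ∀ ρ > (0:ℝ), 0 < P' ρ)
    (hf : ContDiffOn ℝ 1 f (Set.Icc 0 ζ))
    (hf0 : f 0 = 0)
    (hP2 : ∀ ρ ∈ Set.Icc (0:ℝ) ζ, P ρ = k * ρ ^ γ * (1 + f ρ))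
    (hQ : ∀ ρ ≥ (0:ℝ), Q ρ = ∫ s in (0:ℝ)..ρ, P' s / (s + P s))
    (hginv : ∀ y > (0:ℝ), 0 < g y ∧ Q (g y) = y)
    (hg0 : ∀ y ≤ (0:ℝ), g y = 0)
    (hg₀ : ∀ y, g₀ y = k ^ (-α) * ((γ - 1) / γ) ^ α * (max y 0) ^ α) :
    ∃ κ₀ > 0, ∃ C > 0, ∀ y ∈ Set.Icc (0:ℝ) κ₀,
      |g y - g₀ y| + y * |deriv g y - deriv g₀ y| ≤ C * y ^ (α + 1) := by
  obtain ⟨β, hβ⟩ : ∃ β, β = γ - 1 := ⟨_, rfl⟩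
  have hβ0 : 0 < β := by rw [hβ]; linarith
  have hβ1 : β < 1 := by rw [hβ]; linarith
  have hγ0 : 0 < γ := by linarith
  have hαβ : β * α = 1 := by rw [hα, ← hβ]; field_simp
  have hα1 : 1 ≤ α := by nlinarith
  have hPmono : StrictMonoOn P (Ici 0) := by
    refine strictMonoOn_of_deriv_pos (convex_Ici 0)
      (fun x hx => (hPderiv x hx).continuousAt.continuousWithinAt) fun x hx => ?_
    rw [interior_Ici] at hx
    rw [(hPderiv x (le_of_lt hx)).deriv]
    exact hP'pos x hx
  have hPpos : ∀ ρ > (0:ℝ), 0 < P ρ := fun ρ hρ =>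
    hP0 ▸ hPmono self_mem_Ici hρ.le hρ
  set h : ℝ → ℝ := fun s => P' s / (s + P s) with hh
  have hhpos : ∀ ρ > (0:ℝ), 0 < h ρ := fun ρ hρ =>
    div_pos (hP'pos ρ hρ) (add_pos hρ (hPpos ρ hρ))
  have hhc : ContinuousOn h (Ioi 0) := by
    refine (hP'cont.mono Ioi_subset_Ici_self).div
      (continuousOn_id.add fun x hx => (hPderiv x (le_of_lt hx)).continuousAt.continuousWithinAt)
      fun x hx => (add_pos hx (hPpos x hx)).ne'
  obtain ⟨M, hM, r, hr, hb⟩ :=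
    integrand_bound hk (by linarith) hγ2 hζ hPderiv hPpos hf hf0 hP2
  rw [← hβ] at hb
  have hint : ∀ ρ ≥ (0:ℝ), IntervalIntegrable h MeasureTheory.volume 0 ρ := fun ρ hρ =>
    intervalIntegrable_of_bound hβ0 hr hhc hb hρ
  have hQ0 : Q 0 = 0 := by rw [hQ 0 le_rfl, intervalIntegral.integral_same]
  have hQmono : StrictMonoOn Q (Ici 0) := by
    intro a ha b hb' hab
    have ha' : (0:ℝ) ≤ a := ha
    have hsub := intervalIntegral.integral_interval_sub_left (hint b hb') (hint a ha)
    have hpos := intervalIntegral.intervalIntegral_pos_of_pos_on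
      ((hint a ha).symm.trans (hint b hb')) (fun x hx => hhpos x (ha'.trans_lt hx.1)) hab
    rw [← sub_pos, hQ a ha, hQ b hb']
    exact hsub ▸ hpos
  have hQd : ∀ ρ > 0, HasDerivAt Q (h ρ) ρ := by
    intro ρ hρ
    refine (intervalIntegral.integral_hasDerivAt_right (hint ρ hρ.le)
      (hhc.stronglyMeasurableAtFilter isOpen_Ioi ρ hρ)
      (hhc.continuousAt (Ioi_mem_nhds hρ))).congr_of_eventuallyEq ?_
    filter_upwards [Ioi_mem_nhds hρ] with x hx using hQ x (le_of_lt hx)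
  obtain ⟨c, hc⟩ : ∃ c, c = k * γ / β := ⟨_, rfl⟩
  have hc0 : 0 < c := by rw [hc]; positivity
  have hA : k * γ = c * β := by rw [hc]; field_simp
  have hA0 : 0 < k * γ := by positivity
  obtain ⟨N, hN⟩ : ∃ N, N = M / (2 * β) := ⟨_, rfl⟩
  have hN0 : 0 < N := by rw [hN]; positivity
  obtain ⟨m, hm⟩ : ∃ m, m = min (c / (2 * N)) (k * γ / (2 * M)) := ⟨_, rfl⟩
  have hm0 : 0 < m := by rw [hm]; positivity
  have hQb : ∀ ρ ∈ Ioc 0 r, |Q ρ - c * ρ ^ β| ≤ N * ρ ^ (2 * β) := by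
    intro ρ hρ
    rw [hQ ρ hρ.1.le, hc, hN]
    exact integral_bound hβ0 hr hhc hb hρ
  have hg₀' : ∀ y > (0:ℝ), g₀ y = (y / c) ^ α := by
    intro y hy
    have : y / c = k⁻¹ * (β / γ) * y := by rw [hc]; field_simp
    rw [hg₀, max_eq_left hy.le, this, Real.mul_rpow (by positivity) hy.le,
      Real.mul_rpow (by positivity) (by positivity), Real.inv_rpow hk.le, Real.rpow_neg hk.le, hβ]
  have hg₀d : ∀ y > (0:ℝ), y * deriv g₀ y = α * (y / c) ^ α := by
    intro y hy
    have hyc : 0 < y / c := by positivity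
    have h1 : HasDerivAt (fun x : ℝ => (x / c) ^ α) (1 / c * α * (y / c) ^ (α - 1)) y :=
      ((hasDerivAt_id y).div_const c).rpow_const (Or.inr hα1)
    have h2 : HasDerivAt g₀ (1 / c * α * (y / c) ^ (α - 1)) y := by
      refine h1.congr_of_eventuallyEq ?_
      filter_upwards [Ioi_mem_nhds hy] with x hx using hg₀' x hx
    rw [h2.deriv, Real.rpow_sub_one hyc.ne']
    field_simp
  -- Below `ρs` the error terms are at most half of the leading terms.
  obtain ⟨ρs, hρs⟩ : ∃ ρs, ρs = min r (m ^ α) := ⟨_, rfl⟩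
  have hρs0 : 0 < ρs := by rw [hρs]; positivity
  obtain ⟨C₁, hC₁⟩ : ∃ C, C = α * (N / c) * (2 / c) ^ (α + 1) := ⟨_, rfl⟩
  obtain ⟨C₂, hC₂⟩ : ∃ C, C = 2 * (N + α * M) / (k * γ) * (2 / c) ^ (α + 1) := ⟨_, rfl⟩
  have hα0 : 0 < α := by linarith
  refine ⟨Q ρs, hQ0 ▸ hQmono self_mem_Ici hρs0.le hρs0, (1 + α) * C₁ + C₂,
    by rw [hC₁, hC₂]; positivity, ?_⟩
  rintro y ⟨hy0, hyκ⟩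
  rcases hy0.eq_or_lt with rfl | hy
  -- At `y = 0` the factor `y` removes the derivatives.
  · rw [hg0 0 le_rfl, hg₀, max_self, Real.zero_rpow hα0.ne', Real.zero_rpow (by positivity)]
    simp
  obtain ⟨hρ, hQg⟩ := hginv y hy
  have hgle : g y ≤ ρs := by
    rw [← hQmono.le_iff_le hρ.le hρs0.le, hQg]
    exact hyκ
  have hgr : g y ≤ r := hgle.trans (hρs ▸ min_le_left _ _)
  have hqm : g y ^ β ≤ m := by
    calc g y ^ β ≤ (m ^ α) ^ β := by
          gcongr
          exact hgle.trans (hρs ▸ min_le_right _ _)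
      _ = m := by rw [← Real.rpow_mul hm0.le, mul_comm, hαβ, Real.rpow_one]
  have hNs : N * g y ^ β ≤ c / 2 := by
    calc N * g y ^ β ≤ N * (c / (2 * N)) := by
          gcongr
          exact hqm.trans (hm ▸ min_le_left _ _)
      _ = c / 2 := by field_simp
  have hMs : M * g y ^ β ≤ k * γ / 2 := by
    calc M * g y ^ β ≤ M * (k * γ / (2 * M)) := by
          gcongr
          exact hqm.trans (hm ▸ min_le_right _ _)
      _ = k * γ / 2 := by field_simp
  have hQy := hQb (g y) ⟨hρ, hgr⟩
  rw [hQg] at hQy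
  obtain ⟨b1, b2⟩ := inversion_bound hβ0 hα1 hαβ hc0 hA hN0 hM hρ hy hQy
    (hb (g y) ⟨hρ, hgr⟩) hNs hMs
  rw [← hC₁] at b1
  rw [← hC₂] at b2
  change |y / h (g y) - α * g y| ≤ _ at b2
  have hgd := hasDerivAt_of_strictMonoOn_inverse hQmono hQ0 hQd hhpos hginv hy
  have hder : y * |deriv g y - deriv g₀ y|
      ≤ |y / h (g y) - α * g y| + α * |g y - (y / c) ^ α| := by
    have e : y * (deriv g y - deriv g₀ y)
        = (y / h (g y) - α * g y) + α * (g y - (y / c) ^ α) := by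
      rw [mul_sub, hg₀d y hy, hgd.deriv]; ring
    calc y * |deriv g y - deriv g₀ y| = |y * (deriv g y - deriv g₀ y)| := by
          rw [abs_mul, abs_of_pos hy]
      _ ≤ _ := by
          rw [e]
          refine (abs_add_le _ _).trans ?_
          rw [abs_mul α, abs_of_pos hα0]
  rw [hg₀' y hy]
  have := mul_le_mul_of_nonneg_left b1 hα0.le
  linarith
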